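/- Let 1 denote the constant function equal to 1 on [0,1], and let (a_n) be the sequence defined by a_0 = 0 and a_{n+1} = a_n + c_{a_n}. Then for every n ≥ 0 and every x ∈ [0,1], the n-th iterate satisfies 𝒜ⁿ1(x) ≤ exp(a_n(x − 1)). -/

import Mathlib

/-! Write `h_a x = exp (a (x - 1))`. On functions with values in `[0,1]` the operator `frogA` is
monotone as soon as the larger function is nondecreasing (`frogA_mono`), so by induction it
suffices to show `frogA h_a ≤ h_{a + c}` with `c = ccoef a`. Dividing by `h_a x`, putting `b = a/2`
and using `1 - c (1 - x) ≤ exp (-c (1 - x))`, this reduces to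

`(1 + x) (exp (-b x) - exp (-b)) ≤ (1 - x) (1 - exp (-max b 2))`   for `x ∈ [0,1]`, `b ≥ 0`.

* For `b ≥ 2` it says that `(1 + x) exp (-b x)`, which is then convex in `x` on `[0,1]`, lies below
  its chord (`chord_bound`).
* For `b ≤ 2`, put `y = exp (-b)` and bound the function `y ^ x - y`, concave in `y`, by its tangent
  at a point `exp (-s)` where that tangent has nonpositive slope (`tangent_bound`). If `x ≤ 1/5`,
  `s = 2` works and gives back the case `b = 2`. If `x ≥ 1/5`, `s = 2 / (1 + x)` works for every `b`
  and leaves the one-variable inequality `(1 + x) exp (-2 x / (1 + x)) ≤ 1 - exp (-2)`, whose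
  left side is largest at `x = 1/5`.
-/

/-- The operator 𝒜 from the frog model recursion. -/
noncomputable def frogA (g : ℝ → ℝ) (x : ℝ) : ℝ :=
  ((x + 2) / 3) * (g ((x + 1) / 2)) ^ 2 +
    ((x + 1) / 3) * g (x / 2) * (1 - g ((x + 1) / 2))

/-- `c_a = e^{−2}/3` for `0 ≤ a ≤ 4` and `c_a = e^{−a/2}/3` for `a ≥ 4`. -/
noncomputable def ccoef (a : ℝ) : ℝ :=
  if a ≤ 4 then Real.exp (-2) / 3 else Real.exp (-a / 2) / 3

open Real Set

/-- For `b ≥ 2` the function `(1 + x) exp (-b x)` is convex on `[0,1]`, hence below its chord. -/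
lemma chord_bound {b x : ℝ} (hb : 2 ≤ b) (hx : x ∈ Icc (0:ℝ) 1) :
    (1 + x) * exp (-(b * x)) ≤ (1 - x) + 2 * x * exp (-b) := by
  have hexp : ∀ t : ℝ, HasDerivAt (fun t => exp (-(b * t))) (exp (-(b * t)) * (-b)) t := by
    intro t
    simpa using ((hasDerivAt_id t).const_mul b).neg.exp
  have h1 : ∀ t : ℝ, HasDerivAt (fun t => (1 + t) * exp (-(b * t)))
      ((1 - b * (1 + t)) * exp (-(b * t))) t := by
    intro t
    refine (((hasDerivAt_id t).const_add 1).mul (hexp t)).congr_deriv ?_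
    simp only [id]; ring
  have h2 : ∀ t : ℝ, HasDerivAt (fun t => (1 - b * (1 + t)) * exp (-(b * t)))
      (b * (b * (1 + t) - 2) * exp (-(b * t))) t := by
    intro t
    refine (((((hasDerivAt_id t).const_add 1).const_mul b).const_sub 1).mul
      (hexp t)).congr_deriv ?_
    simp only [id]; ring
  have hconv : ConvexOn ℝ (Icc (0:ℝ) 1) (fun t => (1 + t) * exp (-(b * t))) := by
    refine convexOn_of_hasDerivWithinAt2_nonneg (convex_Icc 0 1)
      (fun t _ => (h1 t).continuousAt.continuousWithinAt)
      (fun t _ => (h1 t).hasDerivWithinAt) (fun t _ => (h2 t).hasDerivWithinAt) ?_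
    intro t ht
    have ht' := interior_subset ht
    have : 0 ≤ b * (1 + t) - 2 := by nlinarith [ht'.1]
    have hb0 : 0 ≤ b := by linarith
    positivity
  have := hconv.2 (left_mem_Icc.2 zero_le_one) (right_mem_Icc.2 zero_le_one)
    (sub_nonneg.2 hx.2) hx.1 (by ring)
  simp at this
  linarith

/-- The concave function `y ↦ y ^ x`, at `y = exp (-b)`, lies below its tangent at `exp (-s)`. -/
lemma tangent_bound {x : ℝ} (b s : ℝ) (hx : x ∈ Icc (0:ℝ) 1) :
    exp (-(b * x)) ≤ (1 - x) * exp (-(s * x)) + x * exp (s * (1 - x)) * exp (-b) := by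
  have h := convexOn_exp.2 (mem_univ 0) (mem_univ (s - b)) (sub_nonneg.2 hx.2) hx.1 (by ring)
  simp only [smul_eq_mul, mul_zero, zero_add, exp_zero, mul_one] at h
  have h2 := mul_le_mul_of_nonneg_left h (exp_pos (-(s * x))).le
  have e1 : exp (-(s * x)) * exp (x * (s - b)) = exp (-(b * x)) := by
    rw [← exp_add]; congr 1; ring
  have e2 : exp (s * (1 - x)) * exp (-b) = exp (-(s * x)) * exp (s - b) := by
    rw [← exp_add, ← exp_add]; congr 1; ring
  rw [e1] at h2
  rw [mul_assoc x, e2]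
  linarith

lemma exp_neg_two_lt : exp (-2) < 0.1354 := by
  have h := exp_neg_one_lt_d9
  have e : exp (-2) = exp (-1) ^ 2 := by rw [← exp_nat_mul]; norm_num
  rw [e]
  nlinarith [exp_pos (-1)]

lemma exp_neg_third_lt : exp (-(1/3)) < 0.7166 := by
  have e : exp (-(1/3)) ^ 3 = exp (-1) := by rw [← exp_nat_mul]; norm_num
  refine lt_of_pow_lt_pow_left₀ 3 (by norm_num) ?_
  rw [e]
  exact exp_neg_one_lt_d9.trans (by norm_num)

lemma exp_eight_fifths_lt : exp (8/5) < 5 := by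
  have e : exp (8/5) ^ 5 = exp 1 ^ 8 := by rw [← exp_nat_mul, ← exp_nat_mul]; norm_num
  refine lt_of_pow_lt_pow_left₀ 5 (by norm_num) ?_
  rw [e]
  exact (pow_lt_pow_left₀ exp_one_lt_d9 (exp_pos 1).le (by norm_num)).trans (by norm_num)

/-- The tangent at `exp (-2)` has nonpositive slope for `x ≤ 1/5`, so `b = 2` is the worst case. -/
lemma key_small {b x : ℝ} (hb : b ≤ 2) (hx : x ∈ Icc (0:ℝ) 1) (hx5 : x ≤ 1/5) :
    (1 + x) * (exp (-(b * x)) - exp (-b)) ≤ (1 - x) * (1 - exp (-2)) := by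
  have hslope : x * exp (2 * (1 - x)) ≤ 1 := by
    have e : exp (2 * (1 - x)) = exp (8/5) * exp (2/5 - 2*x) := by
      rw [← exp_add]; congr 1; ring
    -- `x * exp (2/5 - 2 x)` is at most its value `1/5` at `x = 1/5`
    have h1 : x * exp (2/5 - 2*x) ≤ 1/5 := by
      have h2 : 5 * x ≤ exp (-(2/5 - 2*x)) := by
        have := add_one_le_exp (-(2/5 - 2*x))
        linarith
      rw [exp_neg] at h2
      have hp := exp_pos (2/5 - 2*x)
      have := mul_le_mul_of_nonneg_right h2 hp.le
      rw [inv_mul_cancel₀ hp.ne'] at this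
      linarith
    rw [e]
    nlinarith [exp_eight_fifths_lt, exp_pos (8/5 : ℝ)]
  have ht := tangent_bound b 2 hx
  have e2 : exp (2 * (1 - x)) * exp (-2) = exp (-(2 * x)) := by
    rw [← exp_add]; congr 1; ring
  have hmono : exp (-2) ≤ exp (-b) := exp_le_exp.2 (by linarith)
  have hf : exp (-(b * x)) - exp (-b) ≤ exp (-(2 * x)) - exp (-2) := by
    nlinarith [mul_nonneg (sub_nonneg.2 hslope) (sub_nonneg.2 hmono), congrArg (x * ·) e2]
  have hc := chord_bound le_rfl hx
  have := mul_le_mul_of_nonneg_left hf (by linarith [hx.1] : 0 ≤ 1 + x)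
  linarith

/-- The tangent at `exp (-2 / (1 + x))` has nonpositive slope for all `x > 0`, which gives a bound
uniform in `b`; it is small enough once `x ≥ 1/5`. -/
lemma key_large {x : ℝ} (b : ℝ) (hx : x ∈ Icc (0:ℝ) 1) (hx5 : 1/5 ≤ x) :
    (1 + x) * (exp (-(b * x)) - exp (-b)) ≤ (1 - x) * (1 - exp (-2)) := by
  have hx0 : 0 < x := by linarith
  have hu : 0 < 1 + x := by linarith
  -- the slope condition is `log (1/x) ≥ 2 (1 - x) / (1 + x)`
  have hslope : x * exp (2 / (1 + x) * (1 - x)) ≤ 1 := by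
    have h := le_log_one_add_of_nonneg (x := 1 / x - 1)
      (by rw [sub_nonneg, le_div_iff₀ hx0]; linarith [hx.2])
    have e : 2 * (1 / x - 1) / (1 / x - 1 + 2) = 2 / (1 + x) * (1 - x) := by
      have : 1 / x - 1 + 2 = (1 + x) / x := by field_simp; ring
      rw [this]; field_simp
    rw [e, add_sub_cancel, le_log_iff_exp_le (by positivity), le_div_iff₀ hx0] at h
    linarith
  have ht := tangent_bound b (2 / (1 + x)) hx
  have hf : exp (-(b * x)) - exp (-b) ≤ (1 - x) * exp (-(2 / (1 + x) * x)) := by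
    nlinarith [mul_nonneg (sub_nonneg.2 hslope) (exp_pos (-b)).le]
  have hnum : (1 + x) * exp (-(2 / (1 + x) * x)) ≤ 1 - exp (-2) := by
    set v := 2 / (1 + x) * x - 1/3 with hv
    have hw : (1 + x) * (5/6) ≤ exp v := by
      refine le_trans ?_ (add_one_le_exp v)
      have : v + 1 - (1 + x) * (5/6) = 5/6 * ((x - 1/5) * (1 - x)) / (1 + x) := by
        rw [hv]; field_simp; ring
      have h0 : 0 ≤ 5/6 * ((x - 1/5) * (1 - x)) / (1 + x) :=
        div_nonneg (mul_nonneg (by norm_num)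
          (mul_nonneg (by linarith) (by linarith [hx.2]))) hu.le
      linarith
    have e : exp v * exp (-(2 / (1 + x) * x)) = exp (-(1/3)) := by
      rw [← exp_add]; congr 1; rw [hv]; ring
    have := mul_le_mul_of_nonneg_right hw (exp_pos (-(2 / (1 + x) * x))).le
    rw [e] at this
    linarith [exp_neg_two_lt, exp_neg_third_lt]
  have h1 := mul_le_mul_of_nonneg_left hf hu.le
  have h2 := mul_le_mul_of_nonneg_left hnum (sub_nonneg.2 hx.2)
  linarith

lemma key_ccoef {a x : ℝ} (hx : x ∈ Icc (0:ℝ) 1) :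
    (1 + x) * (exp (-(a / 2 * x)) - exp (-(a / 2))) ≤ (1 - x) * (1 - 3 * ccoef a) := by
  unfold ccoef
  split_ifs with h
  · have e : 3 * (exp (-2) / 3) = exp (-2) := by ring
    rw [e]
    rcases le_total x (1/5) with h5 | h5
    · exact key_small (by linarith) hx h5
    · exact key_large _ hx h5
  · have e : 3 * (exp (-a / 2) / 3) = exp (-(a / 2)) := by rw [neg_div]; ring
    rw [e]
    have := chord_bound (b := a / 2) (by linarith) hx
    linarith

lemma ccoef_nonneg (a : ℝ) : 0 ≤ ccoef a := by
  unfold ccoef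
  split_ifs <;> positivity

lemma frogA_exp_le {a x : ℝ} (hx : x ∈ Icc (0:ℝ) 1) :
    frogA (fun t => exp (a * (t - 1))) x ≤ exp ((a + ccoef a) * (x - 1)) := by
  have e1 : exp (a * ((x + 1) / 2 - 1)) ^ 2 = exp (a * (x - 1)) := by
    rw [← exp_nat_mul]; congr 1; push_cast; ring
  have e2 : exp (a * (x / 2 - 1)) = exp (a * (x - 1)) * exp (-(a / 2 * x)) := by
    rw [← exp_add]; congr 1; ring
  have e3 : exp (-(a / 2 * x)) * exp (a * ((x + 1) / 2 - 1)) = exp (-(a / 2)) := by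
    rw [← exp_add]; congr 1; ring
  have e4 : exp ((a + ccoef a) * (x - 1)) = exp (a * (x - 1)) * exp (ccoef a * (x - 1)) := by
    rw [← exp_add]; congr 1; ring
  have hfac : frogA (fun t => exp (a * (t - 1))) x = exp (a * (x - 1)) *
      ((x + 2) / 3 + (x + 1) / 3 * (exp (-(a / 2 * x)) - exp (-(a / 2)))) := by
    simp only [frogA]
    rw [e1, e2, ← e3]; ring
  rw [hfac, e4]
  refine mul_le_mul_of_nonneg_left ?_ (exp_pos _).le
  have h1 := add_one_le_exp (ccoef a * (x - 1))
  have h2 := key_ccoef (a := a) hx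
  linarith

lemma half_mem {x : ℝ} (hx : x ∈ Icc (0:ℝ) 1) : x / 2 ∈ Icc (0:ℝ) 1 :=
  ⟨by linarith [hx.1], by linarith [hx.2]⟩

lemma half_add_mem {x : ℝ} (hx : x ∈ Icc (0:ℝ) 1) : (x + 1) / 2 ∈ Icc (0:ℝ) 1 :=
  ⟨by linarith [hx.1], by linarith [hx.2]⟩

/-- Monotonicity of the operator. Only the larger function has to be nondecreasing, which avoids
proving that the iterates themselves are. -/
lemma frogA_mono {g h : ℝ → ℝ} (hg : ∀ t ∈ Icc (0:ℝ) 1, 0 ≤ g t)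
    (hgh : ∀ t ∈ Icc (0:ℝ) 1, g t ≤ h t) (h1 : ∀ t ∈ Icc (0:ℝ) 1, h t ≤ 1)
    (hm : MonotoneOn h (Icc 0 1)) {x : ℝ} (hx : x ∈ Icc (0:ℝ) 1) :
    frogA g x ≤ frogA h x := by
  have hq := half_mem hx
  have hp := half_add_mem hx
  have hqp := hm hq hp (by linarith)
  unfold frogA
  have p0 := hg _ hp
  have pp := hgh _ hp
  have qq := hgh _ hq
  have p1 := h1 _ hp
  generalize g ((x + 1) / 2) = p at *
  generalize h ((x + 1) / 2) = p' at *
  generalize g (x / 2) = q at *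
  generalize h (x / 2) = q' at *
  obtain ⟨x0, x1⟩ := hx
  -- increase `q` to `q'` first, then `p` to `p'`
  have s1 : 0 ≤ (x + 1) * ((q' - q) * (1 - p)) :=
    mul_nonneg (by linarith) (mul_nonneg (by linarith) (by linarith))
  have s2 : 0 ≤ (p' - p) * ((x + 2) * (p' + p) - (x + 1) * q') := by
    refine mul_nonneg (by linarith) ?_
    nlinarith [mul_nonneg x0 p0, mul_nonneg x0 (sub_nonneg.2 hqp)]
  linarith

lemma frogA_nonneg {g : ℝ → ℝ} (hg : ∀ t ∈ Icc (0:ℝ) 1, 0 ≤ g t)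
    (h1 : ∀ t ∈ Icc (0:ℝ) 1, g t ≤ 1) {x : ℝ} (hx : x ∈ Icc (0:ℝ) 1) : 0 ≤ frogA g x := by
  have a1 := hg _ (half_mem hx)
  have a2 := sub_nonneg.2 (h1 _ (half_add_mem hx))
  have a3 := hx.1
  unfold frogA
  positivity

/-- With `a_0 = 0` and `a_{n+1} = a_n + c_{a_n}`, for every `n` and every `x ∈ [0,1]`,
the `n`-th iterate satisfies `𝒜ⁿ1(x) ≤ exp(a_n(x − 1))`. -/
theorem iterate_le_exp (a : ℕ → ℝ) (h0 : a 0 = 0)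
    (hrec : ∀ n, a (n + 1) = a n + ccoef (a n)) :
    ∀ n : ℕ, ∀ x ∈ Set.Icc (0:ℝ) 1,
      frogA^[n] (fun _ => (1:ℝ)) x ≤ Real.exp (a n * (x - 1)) := by
  have ha : ∀ n, 0 ≤ a n := by
    intro n
    induction n with
    | zero => exact h0.ge
    | succ n ih => rw [hrec]; linarith [ccoef_nonneg (a n)]
  have hle1 : ∀ n, ∀ t ∈ Icc (0:ℝ) 1, exp (a n * (t - 1)) ≤ 1 := fun n t ht =>
    exp_le_one_iff.2 (mul_nonpos_of_nonneg_of_nonpos (ha n) (by linarith [ht.2]))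
  have main : ∀ n : ℕ, ∀ x ∈ Icc (0:ℝ) 1, 0 ≤ frogA^[n] (fun _ => (1:ℝ)) x ∧
      frogA^[n] (fun _ => (1:ℝ)) x ≤ exp (a n * (x - 1)) := by
    intro n
    induction n with
    | zero => intro x _; simp [h0]
    | succ n ih =>
      intro x hx
      rw [Function.iterate_succ_apply']
      refine ⟨frogA_nonneg (fun t ht => (ih t ht).1)
        (fun t ht => (ih t ht).2.trans (hle1 n t ht)) hx, ?_⟩
      refine (frogA_mono (fun t ht => (ih t ht).1) (fun t ht => (ih t ht).2) (hle1 n) ?_ hx).trans ?_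
      · intro s _ t _ hst
        exact exp_le_exp.2 (mul_le_mul_of_nonneg_left (by linarith) (ha n))
      · rw [hrec]
        exact frogA_exp_le hx
  exact fun n x hx => (main n x hx).2
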